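/- arXiv:1404.2308 — 3 statements merged into one kernel-verified Lean document; each statement's English description precedes it below -/
import Mathlib

section
/- Let Λ > 1, α ∈ (0,1), and C'', D' > 0 be real constants, and let (n_l)_{l≥0} be a strictly increasing sequence of positive integers such that (n_0 + n_1 + … + n_{l−1})/n_l → 0 as l → ∞ (for instance n_l = 2^{c·2^l} for a constant c ≥ 1). Define the positive real numbers ε_l := D'·Λ^{−α·n_l} and m_l := C''·Λ^{−n_{l−1} + α·n_l} for l ≥ 1. Then the limit as l → ∞ of log(m_1·m_2·…·m_{l−1}) / (−log(m_l·ε_l)) exists and equals α. -/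
open Filter

/-!
Let `a` be the sequence `n` and `S k = a 0 + ⋯ + a (k - 1)`. In `log (m 1 ⋯ m k)` the exponents
`-a (i - 1) + α a i` add up to `α a k + (α - 1) S k - α a 0`, whereas in `m (k + 1) * ε (k + 1)`
the two terms `± α a (k + 1)` cancel and only the exponent `-a k` is left. After division by `a k`
the numerator therefore tends to `α log Λ` and the denominator to `log Λ`, as soon as `S k`, the
constants and the `k` copies of `log C''` are all `o(a k)`. For this `S = o(a)` is enough: it
forces `a → ∞` and `S → ∞`, so that `1 = o(a)`, and summing gives `k = o(S k)`.
-/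

section

open Asymptotics Topology

section SumRangeIsLittleO

variable {a : ℕ → ℝ}

theorem eventually_sum_range_le_of_sum_range_isLittleO (ha_pos : ∀ k, 0 < a k)
    (ha : (fun k => ∑ i ∈ Finset.range k, a i) =o[atTop] a) :
    ∀ᶠ k in atTop, ∑ i ∈ Finset.range k, a i ≤ a k := by
  filter_upwards [ha.bound one_pos] with k hk
  rw [one_mul, Real.norm_of_nonneg (ha_pos k).le] at hk
  exact (Real.le_norm_self _).trans hk

theorem tendsto_sum_range_atTop_of_sum_range_isLittleO (ha_pos : ∀ k, 0 < a k)
    (ha : (fun k => ∑ i ∈ Finset.range k, a i) =o[atTop] a) :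
    Tendsto (fun k => ∑ i ∈ Finset.range k, a i) atTop atTop := by
  have hzero_le : ∀ᶠ k in atTop, a 0 ≤ a k := by
    filter_upwards [eventually_sum_range_le_of_sum_range_isLittleO ha_pos ha,
      eventually_gt_atTop 0] with k hk hk_pos
    exact (Finset.single_le_sum (fun i _ => (ha_pos i).le) (Finset.mem_range.2 hk_pos)).trans hk
  refine (not_summable_iff_tendsto_nat_atTop_of_nonneg fun k => (ha_pos k).le).1 fun hs => ?_
  exact (ha_pos 0).not_ge (ge_of_tendsto hs.tendsto_atTop_zero hzero_le)

theorem tendsto_atTop_of_sum_range_isLittleO (ha_pos : ∀ k, 0 < a k)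
    (ha : (fun k => ∑ i ∈ Finset.range k, a i) =o[atTop] a) : Tendsto a atTop atTop :=
  tendsto_atTop_mono' atTop (eventually_sum_range_le_of_sum_range_isLittleO ha_pos ha)
    (tendsto_sum_range_atTop_of_sum_range_isLittleO ha_pos ha)

theorem natCast_isLittleO_of_sum_range_isLittleO (ha_pos : ∀ k, 0 < a k)
    (ha : (fun k => ∑ i ∈ Finset.range k, a i) =o[atTop] a) :
    (fun k : ℕ => (k : ℝ)) =o[atTop] a := by
  have hone : (fun _ : ℕ => (1 : ℝ)) =o[atTop] a :=
    isLittleO_const_left.2 (Or.inr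
      (tendsto_norm_atTop_atTop.comp (tendsto_atTop_of_sum_range_isLittleO ha_pos ha)))
  have hcast : (fun k : ℕ => (k : ℝ)) =o[atTop] fun k => ∑ i ∈ Finset.range k, a i := by
    simpa using hone.sum_range (fun k => (ha_pos k).le)
      (tendsto_sum_range_atTop_of_sum_range_isLittleO ha_pos ha)
  exact hcast.trans ha

end SumRangeIsLittleO

theorem sum_range_neg_add_mul_succ {R : Type*} [CommRing R] (α : R) (a : ℕ → R) (k : ℕ) :
    ∑ i ∈ Finset.range k, (-a i + α * a (i + 1)) =
      α * a k + (α - 1) * ∑ i ∈ Finset.range k, a i - α * a 0 := by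
  have hshift : ∑ i ∈ Finset.range k, a (i + 1) = ∑ i ∈ Finset.range k, a i + a k - a 0 :=
    eq_sub_of_add_eq ((Finset.sum_range_succ' a k).symm.trans (Finset.sum_range_succ a k))
  rw [Finset.sum_add_distrib, Finset.sum_neg_distrib, ← Finset.mul_sum, hshift]
  ring

section LogRpow

variable {Λ C : ℝ}

theorem log_const_mul_rpow (hΛ : 0 < Λ) (hC : 0 < C) (x : ℝ) :
    Real.log (C * Λ ^ x) = Real.log C + x * Real.log Λ := by
  rw [Real.log_mul hC.ne' (Real.rpow_pos_of_pos hΛ x).ne', Real.log_rpow hΛ]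

theorem log_prod_const_mul_rpow {ι : Type*} (hΛ : 0 < Λ) (hC : 0 < C) (s : Finset ι) (x : ι → ℝ) :
    Real.log (∏ i ∈ s, C * Λ ^ x i) = s.card * Real.log C + (∑ i ∈ s, x i) * Real.log Λ := by
  rw [Real.log_prod fun i _ => (mul_pos hC (Real.rpow_pos_of_pos hΛ (x i))).ne']
  simp only [log_const_mul_rpow hΛ hC, Finset.sum_add_distrib, Finset.sum_const, nsmul_eq_mul,
    Finset.sum_mul]

theorem tendsto_neg_log_const_mul_rpow_neg_div {ι : Type*} {l : Filter ι} {x : ι → ℝ}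
    (hΛ : 0 < Λ) (hC : 0 < C) (hx : Tendsto x l atTop) :
    Tendsto (fun k => -Real.log (C * Λ ^ (-x k)) / x k) l (𝓝 (Real.log Λ)) := by
  have hlim : Tendsto (fun k => Real.log Λ - Real.log C / x k) l (𝓝 (Real.log Λ)) := by
    simpa using (hx.const_div_atTop (Real.log C)).const_sub (Real.log Λ)
  refine hlim.congr' ?_
  filter_upwards [hx.eventually_ne_atTop 0] with k hk
  rw [log_const_mul_rpow hΛ hC]
  field_simp
  ring

theorem tendsto_log_prod_const_mul_rpow_div {a : ℕ → ℝ} (hΛ : 0 < Λ) (hC : 0 < C) (α : ℝ)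
    (ha_pos : ∀ k, 0 < a k) (ha : (fun k => ∑ i ∈ Finset.range k, a i) =o[atTop] a) :
    Tendsto (fun k => Real.log (∏ i ∈ Finset.range k, C * Λ ^ (-a i + α * a (i + 1))) / a k)
      atTop (𝓝 (α * Real.log Λ)) := by
  have hcard := (natCast_isLittleO_of_sum_range_isLittleO ha_pos ha).tendsto_div_nhds_zero
  have hsum := ha.tendsto_div_nhds_zero
  have hinit : Tendsto (fun k => α * a 0 / a k) atTop (𝓝 0) :=
    (tendsto_atTop_of_sum_range_isLittleO ha_pos ha).const_div_atTop _
  have hlim : Tendsto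
      (fun k : ℕ => k / a k * Real.log C +
        (α + (α - 1) * ((∑ i ∈ Finset.range k, a i) / a k) - α * a 0 / a k) * Real.log Λ)
      atTop (𝓝 (α * Real.log Λ)) := by
    simpa using (hcard.mul_const (Real.log C)).add
      ((((hsum.const_mul (α - 1)).const_add α).sub hinit).mul_const (Real.log Λ))
  refine hlim.congr fun k => ?_
  have hk := (ha_pos k).ne'
  rw [log_prod_const_mul_rpow hΛ hC, sum_range_neg_add_mul_succ, Finset.card_range]
  field_simp

end LogRpow

theorem stmt4_general (Λ α C'' D' : ℝ) (hΛ : 0 < Λ) (hΛ_ne : Λ ≠ 1) (hC'' : 0 < C'') (hD' : 0 < D')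
    (a : ℕ → ℝ) (ha_pos : ∀ l, 0 < a l)
    (ha_growth : Tendsto (fun l => (∑ i ∈ Finset.range l, a i) / a l) atTop (𝓝 0))
    (ε m : ℕ → ℝ)
    (hε : ∀ l, 1 ≤ l → ε l = D' * Λ ^ (-(α * a l)))
    (hm : ∀ l, 1 ≤ l → m l = C'' * Λ ^ (-a (l - 1) + α * a l)) :
    Tendsto (fun l => Real.log (∏ i ∈ Finset.Ico 1 l, m i) / (-Real.log (m l * ε l)))
      atTop (𝓝 α) := by
  have ha : (fun k => ∑ i ∈ Finset.range k, a i) =o[atTop] a :=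
    (isLittleO_iff_tendsto fun k hk => absurd hk (ha_pos k).ne').2 ha_growth
  have hm_succ (k : ℕ) : m (k + 1) = C'' * Λ ^ (-a k + α * a (k + 1)) := hm (k + 1) k.succ_pos
  have hprod (k : ℕ) : ∏ i ∈ Finset.Ico 1 (k + 1), m i =
      ∏ i ∈ Finset.range k, C'' * Λ ^ (-a i + α * a (i + 1)) := by
    simp only [Finset.prod_Ico_eq_prod_range, Nat.add_sub_cancel, Nat.add_comm 1, hm_succ]
  have hmε (k : ℕ) : m (k + 1) * ε (k + 1) = C'' * D' * Λ ^ (-a k) := by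
    rw [hm_succ, hε (k + 1) k.succ_pos, mul_mul_mul_comm, ← Real.rpow_add hΛ, add_neg_cancel_right]
  have hlog : Real.log Λ ≠ 0 := Real.log_ne_zero_of_pos_of_ne_one hΛ hΛ_ne
  have hquot := (tendsto_log_prod_const_mul_rpow_div hΛ hC'' α ha_pos ha).div
    (tendsto_neg_log_const_mul_rpow_neg_div hΛ (mul_pos hC'' hD')
      (tendsto_atTop_of_sum_range_isLittleO ha_pos ha)) hlog
  rw [mul_div_cancel_right₀ α hlog] at hquot
  refine (tendsto_add_atTop_iff_nat 1).1 (hquot.congr fun k => ?_)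
  rw [Pi.div_apply, div_div_div_cancel_right₀ (ha_pos k).ne', hprod, hmε]

end

/-- Computation of the limit appearing in the lower bound for the Hausdorff
dimension of the Cantor set of Newhouse parameters: with
`ε l = D' · Λ^(−α·n l)` and `m l = C'' · Λ^(−n (l−1) + α·n l)`, where `(n l)`
grows so fast that `(n 0 + ⋯ + n (l−1))/n l → 0`, the quotient
`log(m 1 ⋯ m (l−1)) / (−log (m l · ε l))` tends to `α`. -/
theorem stmt4 (Λ α C'' D' : ℝ) (hΛ : 1 < Λ) (hα : α ∈ Set.Ioo (0 : ℝ) 1)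
    (hC'' : 0 < C'') (hD' : 0 < D') (n : ℕ → ℕ)
    (hn_pos : ∀ l, 0 < n l) (hn_mono : StrictMono n)
    (hn_growth :
      Tendsto (fun l => (∑ i ∈ Finset.range l, (n i : ℝ)) / (n l : ℝ)) atTop (nhds 0))
    (ε m : ℕ → ℝ)
    (hε : ∀ l, 1 ≤ l → ε l = D' * Λ ^ (-(α * (n l : ℝ))))
    (hm : ∀ l, 1 ≤ l → m l = C'' * Λ ^ (-((n (l - 1) : ℝ)) + α * (n l : ℝ))) :
    Tendsto
      (fun l => Real.log (∏ i ∈ Finset.Ico 1 l, m i) / (- Real.log (m l * ε l)))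
      atTop (nhds α) :=
  stmt4_general Λ α C'' D' (one_pos.trans hΛ) hΛ.ne' hC'' hD' (fun l => (n l : ℝ))
    (fun l => Nat.cast_pos.2 (hn_pos l)) hn_growth ε m hε hm
end

section
/- Let α ∈ (0,1), let Λ' > Λ > 1, D > 0 be real constants, let M̄ be a positive integer, let I ⊆ ℝ be a nonempty open interval, and let (S_m)_{m∈ℕ} be a family of subsets of ℝ. Assume that for every a₁ ∈ I there exist a sequence of nondegenerate closed bounded intervals (I_k(a₁))_{k≥1} with |I_1(a₁)| ≤ 1 and a sequence of positive integers (m_k(a₁))_{k≥1} such that: (i) the distance from a₁ to I_k(a₁) is at most D·|I_k(a₁)|^α, where |I_k(a₁)| denotes the length of I_k(a₁); (ii) m_{k+M̄}(a₁) > m_j(a₁) for every 0 < j < k; (iii) I_k(a₁) ⊆ S_{m_k(a₁)} for every k; (iv) Λ·|I_{k+1}(a₁)| < |I_k(a₁)| < Λ'·|I_{k+1}(a₁)| for every k. Then the set {a ∈ ℝ : a ∈ S_m for infinitely many m ∈ ℕ} has Hausdorff dimension at least α. -/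
open MeasureTheory ENNReal

/-!
Let `s < α * d`, where `d` is the dimension of the space, and let `G N` be the union of the `S m`
with `m ≥ N`. By (iv) the lengths of the intervals accumulating at a parameter leave no gaps on the
logarithmic scale, so for every small `ρ` there is a ball of radius `ρ` in `G N` at distance
`O(ρ ^ α)`. How small `ρ` must be depends only on the length of the first interval, which by Baire
is bounded below on a dense part of some ball; hence the estimate is uniform on that ball.

If the set `⋂ N, G N` had zero `s`-dimensional Hausdorff measure, it could be covered by balls of
radii `u i` with `∑ (u i) ^ s` as small as we like. Consider a ball of radius `l` such that the
cover balls meeting it have weight at most `η * l ^ s`. If every nearby ball of radius `ρ` in `G N`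
met cover balls of weight more than `η * ρ ^ s`, then a volume count over the ball of radius `l / 2`
would give `l ^ d ≲ η * l ^ d + O(ρ ^ (α * d - s))`, which fails for small `ρ` and `η`. So the
weight condition passes to a smaller ball inside `G N`. Iterating over `N` leads to a point of
`⋂ N, G N` which no cover ball contains: the cover balls meeting the ball of radius `ρ` at a given
step have radius at most `ρ`, and `ρ` tends to `0`.
-/

section

open Filter Metric Set Topology

variable {X : Type*} [MetricSpace X]

/-- Ahlfors regularity of dimension `d`: balls of radius `r` have measure comparable to `r ^ d`.
It supplies the volume count behind the dimension bound, in place of Lebesgue measure on `ℝ`.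
The lower bound is only asked for small radii, so that bounded spaces are included. -/
def IsAhlforsRegular [MeasurableSpace X] (μ : Measure X) (d : ℝ) : Prop :=
  ∃ c > 0, ∃ K > 0, ∃ R > 0, ∀ x, ∀ r > 0,
    μ (closedBall x r) ≤ .ofReal (K * r ^ d) ∧ (r ≤ R → .ofReal (c * r ^ d) ≤ μ (closedBall x r))

lemma isAhlforsRegular_volume_real : IsAhlforsRegular (volume : Measure ℝ) 1 :=
  ⟨2, two_pos, 2, two_pos, 1, one_pos, fun x r _ ↦ by simp⟩

/-- `G` is `α`-ubiquitous in `J` if at every small scale `ρ` each point of `J` lies within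
`O(ρ ^ α)` of the centre of a ball of radius `ρ` contained in `G`, uniformly in the point. This is
the property of the unions `⋃ n ≥ N, S n` from which the dimension bound is deduced. -/
def IsUbiquitous (α : ℝ) (J G : Set X) : Prop :=
  ∃ C : ℝ, ∀ᶠ ρ in 𝓝[>] 0, ∀ a ∈ J, ∃ x, dist x a ≤ C * ρ ^ α ∧ closedBall x ρ ⊆ G

lemma IsUbiquitous.mono_left {α : ℝ} {J J' G : Set X} (h : IsUbiquitous α J' G) (hJ : J ⊆ J') :
    IsUbiquitous α J G :=
  h.imp fun _ hC ↦ hC.mono fun _ hρ a ha ↦ hρ a (hJ ha)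

lemma IsUbiquitous.closure {α : ℝ} {J G : Set X} (h : IsUbiquitous α J G) :
    IsUbiquitous α (closure J) G := by
  obtain ⟨C, hC⟩ := h
  refine ⟨C + 1, ?_⟩
  filter_upwards [hC, self_mem_nhdsWithin] with ρ hρC hρ a ha
  obtain ⟨b, hb, hab⟩ := mem_closure_iff.1 ha (ρ ^ α) (Real.rpow_pos_of_pos hρ α)
  obtain ⟨x, hx, hxG⟩ := hρC b hb
  refine ⟨x, ?_, hxG⟩
  calc dist x a ≤ dist x b + dist a b := dist_triangle_right x a b
    _ ≤ (C + 1) * ρ ^ α := by linarith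

lemma IsUbiquitous.exists_eventually_dist_add_le {α : ℝ} {J G : Set X} (h : IsUbiquitous α J G)
    (hα : α ≤ 1) : ∃ C ≥ 0, ∀ᶠ ρ : ℝ in 𝓝[>] 0, ∀ a ∈ J, ∃ x, dist x a + ρ ≤ C * ρ ^ α ∧
      closedBall x ρ ⊆ G := by
  obtain ⟨C, hC⟩ := h
  refine ⟨|C| + 1, by positivity, ?_⟩
  filter_upwards [hC, Ioc_mem_nhdsGT one_pos] with ρ hρC ⟨hρ, hρ1⟩ a ha
  obtain ⟨x, hxa, hxG⟩ := hρC a ha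
  refine ⟨x, ?_, hxG⟩
  calc dist x a + ρ ≤ C * ρ ^ α + ρ ^ α := add_le_add hxa (Real.self_le_rpow_of_le_one hρ.le hρ1 hα)
    _ ≤ (|C| + 1) * ρ ^ α := by rw [add_one_mul]; gcongr; exact le_abs_self C

/-- The `s`-dimensional weight `∑ (u i) ^ s` of those balls `closedBall (p i) (u i)` of a family
that meet `B`. The construction keeps it small compared with `ρ ^ s` along balls `B` of radii
`ρ → 0`. -/
noncomputable def meetingWeight {ι : Type*} (p : ι → X) (u : ι → ℝ) (s : ℝ) (B : Set X) : ℝ≥0∞ :=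
  ∑' i : {i | (closedBall (p i) (u i) ∩ B).Nonempty}, .ofReal (u i ^ s)

section MeetingWeight

variable {ι : Type*} {p : ι → X} {u : ι → ℝ} {s : ℝ} {B : Set X}

lemma meetingWeight_le_tsum : meetingWeight p u s B ≤ ∑' i, .ofReal (u i ^ s) :=
  ENNReal.tsum_comp_le_tsum_of_injective Subtype.val_injective fun i ↦ .ofReal (u i ^ s)

lemma le_of_meetingWeight_le {i : ι} {l : ℝ} (hs : 0 < s) (hu : 0 ≤ u i) (hl : 0 ≤ l)
    (hi : (closedBall (p i) (u i) ∩ B).Nonempty)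
    (h : meetingWeight p u s B ≤ .ofReal (l ^ s)) : u i ≤ l := by
  have hle : ENNReal.ofReal (u i ^ s) ≤ .ofReal (l ^ s) :=
    (ENNReal.le_tsum (f := fun j : {j | (closedBall (p j) (u j) ∩ B).Nonempty} ↦
      ENNReal.ofReal (u j ^ s)) ⟨i, hi⟩).trans h
  rwa [ENNReal.ofReal_le_ofReal_iff (by positivity), Real.rpow_le_rpow_iff hu hl hs] at hle

end MeetingWeight

lemma one_le_tsum_min_one {ι : Type*} {f : ι → ℝ≥0∞} (h : 1 ≤ ∑' i, f i) :
    1 ≤ ∑' i, min 1 (f i) := by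
  by_cases! hf : ∃ i, 1 ≤ f i
  · obtain ⟨i, hi⟩ := hf
    exact (min_eq_left hi).ge.trans (ENNReal.le_tsum i)
  · simpa only [min_eq_right (hf _).le] using h

lemma measure_le_tsum_mul_measure {Ω ι : Type*} [MeasurableSpace Ω] [Countable ι] {μ : Measure Ω}
    {E : Set Ω} {B : ι → Set Ω} (hB : ∀ i, MeasurableSet (B i)) {w : ι → ℝ≥0∞}
    (hE : ∀ a ∈ E, 1 ≤ ∑' i, (B i).indicator (fun _ ↦ w i) a) :
    μ E ≤ ∑' i, w i * μ (B i) :=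
  calc μ E ≤ 1 * μ {a | 1 ≤ ∑' i, (B i).indicator (fun _ ↦ w i) a} := by
        rw [one_mul]; exact measure_mono hE
    _ ≤ ∫⁻ a, ∑' i, (B i).indicator (fun _ ↦ w i) a ∂μ :=
        mul_meas_ge_le_lintegral
          (Measurable.tsum fun i ↦ measurable_const.indicator (hB i)) 1
    _ = ∑' i, w i * μ (B i) := by
        rw [lintegral_tsum fun i ↦ (measurable_const.indicator (hB i)).aemeasurable]
        simp only [lintegral_indicator_const (hB _)]

lemma add_rpow_le_two_rpow_mul {x y d : ℝ} (hx : 0 ≤ x) (hy : 0 ≤ y) (hd : 0 ≤ d) :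
    (x + y) ^ d ≤ 2 ^ d * (x ^ d + y ^ d) := by
  have hmax : max x y ^ d ≤ x ^ d + y ^ d := by
    rcases max_choice x y with h | h <;> rw [h] <;>
      linarith [Real.rpow_nonneg hx d, Real.rpow_nonneg hy d]
  calc (x + y) ^ d ≤ (2 * max x y) ^ d := by
        gcongr; linarith [le_max_left x y, le_max_right x y]
    _ = 2 ^ d * max x y ^ d := Real.mul_rpow zero_le_two (le_max_of_le_left hx)
    _ ≤ 2 ^ d * (x ^ d + y ^ d) := by gcongr

lemma min_one_mul_add_rpow_le {A d s u l δ : ℝ} (hA : 0 ≤ A) (hd : 0 ≤ d) (hsd : s ≤ d)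
    (hu : 0 < u) (hul : u ≤ l) (hδ : 0 ≤ δ) :
    min 1 (A * u ^ s) * (u + δ) ^ d ≤ 2 ^ d * (l ^ (d - s) + A * δ ^ d) * u ^ s := by
  have hud : u ^ d ≤ l ^ (d - s) * u ^ s :=
    calc u ^ d = u ^ (d - s) * u ^ s := by rw [← Real.rpow_add hu, sub_add_cancel]
      _ ≤ l ^ (d - s) * u ^ s := by gcongr
  calc min 1 (A * u ^ s) * (u + δ) ^ d
      ≤ min 1 (A * u ^ s) * (2 ^ d * (u ^ d + δ ^ d)) := by
        gcongr; exact add_rpow_le_two_rpow_mul hu.le hδ hd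
    _ = 2 ^ d * (min 1 (A * u ^ s) * u ^ d + min 1 (A * u ^ s) * δ ^ d) := by ring
    _ ≤ 2 ^ d * (1 * (l ^ (d - s) * u ^ s) + A * u ^ s * δ ^ d) := by
        gcongr
        exacts [min_le_left _ _, min_le_right _ _]
    _ = 2 ^ d * (l ^ (d - s) + A * δ ^ d) * u ^ s := by ring

section Selection

variable {ι : Type*} {p : ι → X} {u : ι → ℝ} {s d l : ℝ} {B : Set X}

-- Truncating the weights at `1` is what makes a single large ball of the cover cost at most its
-- own volume in the estimate of `measure_le_of_forall_one_le_mul_meetingWeight`.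
lemma one_le_tsum_indicator_closedBall {A δ ρ : ℝ} {a x : X} (hA : 0 ≤ A)
    (hxB : closedBall x ρ ⊆ B) (hxa : dist x a + ρ ≤ δ)
    (h : 1 ≤ .ofReal A * meetingWeight p u s (closedBall x ρ)) :
    1 ≤ ∑' i : {i | (closedBall (p i) (u i) ∩ B).Nonempty},
      (closedBall (p i) (u i + δ)).indicator (fun _ ↦ ENNReal.ofReal (min 1 (A * u i ^ s))) a := by
  set f : ι → ℝ≥0∞ := fun i ↦
    (closedBall (p i) (u i + δ)).indicator (fun _ ↦ ENNReal.ofReal (min 1 (A * u i ^ s))) a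
  have hsub : {i | (closedBall (p i) (u i) ∩ closedBall x ρ).Nonempty} ⊆
      {i | (closedBall (p i) (u i) ∩ B).Nonempty} :=
    fun i hi ↦ hi.mono (inter_subset_inter_right _ hxB)
  have hf : ∀ i : {i | (closedBall (p i) (u i) ∩ closedBall x ρ).Nonempty},
      min 1 (.ofReal A * .ofReal (u i ^ s)) = f i := by
    rintro ⟨i, z, hzi, hzx⟩
    have ha : a ∈ closedBall (p i) (u i + δ) := by
      rw [mem_closedBall] at hzi hzx ⊢
      linarith [dist_triangle_left a (p i) x, dist_triangle_left x (p i) z]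
    simp only [f, indicator_of_mem ha, ENNReal.ofReal_mul hA, ENNReal.ofReal_min,
      ENNReal.ofReal_one]
  rw [meetingWeight, ← ENNReal.tsum_mul_left] at h
  calc 1 ≤ ∑' i : {i | (closedBall (p i) (u i) ∩ closedBall x ρ).Nonempty},
        min 1 (.ofReal A * .ofReal (u i ^ s)) := one_le_tsum_min_one h
    _ = ∑' i : {i | (closedBall (p i) (u i) ∩ closedBall x ρ).Nonempty}, f i :=
        tsum_congr hf
    _ ≤ ∑' i : {i | (closedBall (p i) (u i) ∩ B).Nonempty}, f i :=
        ENNReal.tsum_mono_subtype f hsub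

variable [MeasurableSpace X] [BorelSpace X] [Countable ι] {μ : Measure X} {K : ℝ}

lemma measure_le_of_forall_one_le_mul_meetingWeight {A δ ρ : ℝ} {E : Set X}
    (hμ : ∀ x, ∀ r > 0, μ (closedBall x r) ≤ .ofReal (K * r ^ d)) (hK : 0 ≤ K)
    (hs : 0 < s) (hsd : s ≤ d) (hu : ∀ i, 0 < u i) (hl : 0 ≤ l)
    (hB : meetingWeight p u s B ≤ .ofReal (l ^ s)) (hA : 0 ≤ A) (hδ : 0 ≤ δ)
    (hE : ∀ a ∈ E, ∃ x, closedBall x ρ ⊆ B ∧ dist x a + ρ ≤ δ ∧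
      1 ≤ .ofReal A * meetingWeight p u s (closedBall x ρ)) :
    μ E ≤ .ofReal (K * (2 ^ d * (l ^ (d - s) + A * δ ^ d))) * meetingWeight p u s B := by
  have hball : ∀ i : {i | (closedBall (p i) (u i) ∩ B).Nonempty},
      .ofReal (min 1 (A * u i ^ s)) * μ (closedBall (p i) (u i + δ)) ≤
        .ofReal (K * (2 ^ d * (l ^ (d - s) + A * δ ^ d))) * .ofReal (u i ^ s) := by
    rintro ⟨i, hi⟩
    have hui := hu i
    have hul : u i ≤ l := le_of_meetingWeight_le hs hui.le hl hi hB
    grw [hμ (p i) (u i + δ) (by positivity)]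
    rw [← ENNReal.ofReal_mul (by positivity), ← ENNReal.ofReal_mul (by positivity)]
    refine ENNReal.ofReal_le_ofReal ?_
    calc min 1 (A * u i ^ s) * (K * (u i + δ) ^ d)
        = K * (min 1 (A * u i ^ s) * (u i + δ) ^ d) := by ring
      _ ≤ K * (2 ^ d * (l ^ (d - s) + A * δ ^ d) * u i ^ s) :=
          mul_le_mul_of_nonneg_left
            (min_one_mul_add_rpow_le hA (hs.le.trans hsd) hsd hui hul hδ) hK
      _ = K * (2 ^ d * (l ^ (d - s) + A * δ ^ d)) * u i ^ s := by ring
  calc μ E ≤ ∑' i : {i | (closedBall (p i) (u i) ∩ B).Nonempty},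
        .ofReal (min 1 (A * u i ^ s)) * μ (closedBall (p i) (u i + δ)) := by
        refine measure_le_tsum_mul_measure (fun _ ↦ measurableSet_closedBall) fun a ha ↦ ?_
        obtain ⟨x, hxB, hxa, hx⟩ := hE a ha
        exact one_le_tsum_indicator_closedBall hA hxB hxa hx
    _ ≤ ∑' i : {i | (closedBall (p i) (u i) ∩ B).Nonempty},
        .ofReal (K * (2 ^ d * (l ^ (d - s) + A * δ ^ d))) * .ofReal (u i ^ s) :=
        ENNReal.tsum_le_tsum hball
    _ = .ofReal (K * (2 ^ d * (l ^ (d - s) + A * δ ^ d))) * meetingWeight p u s B :=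
        ENNReal.tsum_mul_left

lemma eventually_const_mul_rpow_lt (C : ℝ) {t b : ℝ} (ht : 0 < t) (hb : 0 < b) :
    ∀ᶠ ρ : ℝ in 𝓝[>] 0, C * ρ ^ t < b := by
  have hlim : Tendsto (fun ρ : ℝ ↦ C * ρ ^ t) (𝓝 0) (𝓝 (C * 0 ^ t)) :=
    (Real.continuousAt_rpow_const 0 t (.inr ht.le)).tendsto.const_mul C
  rw [Real.zero_rpow ht.ne', mul_zero] at hlim
  exact (hlim.eventually_lt_const hb).filter_mono nhdsWithin_le_nhds

-- The left-hand side is `K * 2 ^ d * (η * l ^ d + O(ρ ^ (α * d - s)))`.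
lemma eventually_volume_lt {α c C η : ℝ} (hsα : s < α * d) (hl : 0 < l) (hη : 0 < η)
    (hC : 0 ≤ C) (hηc : K * 4 ^ d * η < c) :
    ∀ᶠ ρ : ℝ in 𝓝[>] 0, K * (2 ^ d * (l ^ (d - s) + (η * ρ ^ s)⁻¹ * (C * ρ ^ α) ^ d)) *
      (η * l ^ s) < c * (l / 2) ^ d := by
  have hgap : 0 < c * (l / 2) ^ d - K * 4 ^ d * η * (l / 2) ^ d := by
    rw [← sub_mul]; have := sub_pos.2 hηc; positivity
  filter_upwards [eventually_const_mul_rpow_lt (K * 2 ^ d * l ^ s * C ^ d) (sub_pos.2 hsα) hgap,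
    self_mem_nhdsWithin] with ρ hρlt hρ
  replace hρ : 0 < ρ := hρ
  have hmain : l ^ (d - s) * l ^ s = 2 ^ d * (l / 2) ^ d := by
    rw [← Real.rpow_add hl, ← Real.mul_rpow zero_le_two (by positivity)]; congr 1 <;> ring
  have hfour : (4 : ℝ) ^ d = 2 ^ d * 2 ^ d := by
    rw [← Real.mul_rpow zero_le_two zero_le_two]; norm_num
  have herr : (ρ ^ s)⁻¹ * (C * ρ ^ α) ^ d = C ^ d * ρ ^ (α * d - s) := by
    rw [Real.mul_rpow hC (by positivity), ← Real.rpow_mul hρ.le, Real.rpow_sub hρ]; ring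
  calc K * (2 ^ d * (l ^ (d - s) + (η * ρ ^ s)⁻¹ * (C * ρ ^ α) ^ d)) * (η * l ^ s)
      = K * 2 ^ d * η * (l ^ (d - s) * l ^ s) +
          K * 2 ^ d * l ^ s * ((ρ ^ s)⁻¹ * (C * ρ ^ α) ^ d) := by field_simp
    _ = K * 4 ^ d * η * (l / 2) ^ d + K * 2 ^ d * l ^ s * C ^ d * ρ ^ (α * d - s) := by
        rw [hmain, herr, hfour]; ring
    _ < c * (l / 2) ^ d := by linarith

lemma exists_closedBall_subset_meetingWeight_le {α c η : ℝ} {y : X} {G : Set X}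
    (hμ : ∀ x, ∀ r > 0, μ (closedBall x r) ≤ .ofReal (K * r ^ d)) (hK : 0 ≤ K)
    (hμl : .ofReal (c * (l / 2) ^ d) ≤ μ (closedBall y (l / 2)))
    (hα : α ∈ Ioc 0 1) (hs : 0 < s) (hsα : s < α * d) (hη : η ∈ Ioc 0 1)
    (hηc : K * 4 ^ d * η < c) (hu : ∀ i, 0 < u i) (hl : 0 < l)
    (hG : IsUbiquitous α (closedBall y (l / 2)) G)
    (hy : meetingWeight p u s (closedBall y l) ≤ .ofReal (η * l ^ s)) :
    ∃ x ρ, 0 < ρ ∧ ρ ≤ l / 2 ∧ closedBall x ρ ⊆ closedBall y l ∩ G ∧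
      meetingWeight p u s (closedBall x ρ) ≤ .ofReal (η * ρ ^ s) := by
  obtain ⟨hη0, hη1⟩ := hη
  have hd : 0 < d := pos_of_mul_pos_right (hs.trans hsα) hα.1.le
  have hsd : s ≤ d := hsα.le.trans (mul_le_of_le_one_left hd.le hα.2)
  obtain ⟨C, hC0, hC⟩ := hG.exists_eventually_dist_add_le hα.2
  obtain ⟨ρ, ⟨hGρ, hvol, hδl⟩, hρ⟩ := ((hC.and <| (eventually_volume_lt hsα hl hη0 hC0 hηc).and <|
    eventually_const_mul_rpow_lt C hα.1 (half_pos hl)).and self_mem_nhdsWithin).exists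
  replace hρ : 0 < ρ := hρ
  have hρl : ρ ≤ l / 2 := by
    obtain ⟨x, hxy, -⟩ := hGρ y (mem_closedBall_self (by positivity))
    linarith [dist_nonneg (x := x) (y := y)]
  by_contra! hlarge
  have hE : ∀ a ∈ closedBall y (l / 2), ∃ x, closedBall x ρ ⊆ closedBall y l ∧
      dist x a + ρ ≤ C * ρ ^ α ∧
      1 ≤ .ofReal (η * ρ ^ s)⁻¹ * meetingWeight p u s (closedBall x ρ) := by
    intro a ha
    obtain ⟨x, hxa, hxG⟩ := hGρ a ha
    have hxy : closedBall x ρ ⊆ closedBall y l := by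
      apply closedBall_subset_closedBall'
      linarith [dist_triangle x a y, mem_closedBall.1 ha]
    refine ⟨x, hxy, hxa, ?_⟩
    rw [ENNReal.ofReal_inv_of_pos (by positivity), ← ENNReal.div_eq_inv_mul,
      ENNReal.le_div_iff_mul_le (.inl (ENNReal.ofReal_pos.2 (by positivity)).ne')
        (.inl ENNReal.ofReal_ne_top), one_mul]
    exact (hlarge x ρ hρ hρl (subset_inter hxy hxG)).le
  have hy1 : meetingWeight p u s (closedBall y l) ≤ .ofReal (l ^ s) :=
    hy.trans <| ENNReal.ofReal_le_ofReal <| mul_le_of_le_one_left (by positivity) hη1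
  refine hvol.not_ge ((ENNReal.ofReal_le_ofReal_iff (by positivity)).1 ?_)
  rw [ENNReal.ofReal_mul (p := K * _) (by positivity)]
  grw [hμl, ← hy]
  exact measure_le_of_forall_one_le_mul_meetingWeight hμ hK hs hsd hu hl.le hy1 (by positivity)
    (by positivity) hE

end Selection

lemma exists_subset_closedBall_rpow_eq [Nonempty X] {t : Set X} (ht : Bornology.IsBounded t)
    {s η : ℝ} (hs : 0 < s) (hη : 0 < η) :
    ∃ q, ∃ u > 0, t ⊆ closedBall q u ∧ u ^ s = diam t ^ s + η := by
  have hpos : 0 < diam t ^ s + η := add_pos_of_nonneg_of_pos (Real.rpow_nonneg diam_nonneg s) hη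
  have hdiam : diam t ≤ (diam t ^ s + η) ^ s⁻¹ :=
    (Real.le_rpow_inv_iff_of_pos diam_nonneg hpos.le hs).2 (le_add_of_nonneg_right hη.le)
  obtain ⟨q, hq⟩ : ∃ q, t ⊆ closedBall q (diam t) := by
    rcases t.eq_empty_or_nonempty with rfl | ⟨q, hq⟩
    · exact ⟨Classical.arbitrary X, empty_subset _⟩
    · exact ⟨q, fun z hz ↦ dist_le_diam_of_mem ht hz hq⟩
  exact ⟨q, _, Real.rpow_pos_of_pos hpos _, hq.trans (closedBall_subset_closedBall hdiam),
    Real.rpow_inv_rpow hpos.le hs.ne'⟩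

lemma exists_closedBall_cover_of_hausdorffMeasure_eq_zero [MeasurableSpace X] [BorelSpace X]
    [Nonempty X] {s : ℝ} (hs : 0 < s) {E : Set X} (hE : μH[s] E = 0) {ε : ℝ≥0∞} (hε : ε ≠ 0) :
    ∃ (p : ℕ → X) (u : ℕ → ℝ), (∀ i, 0 < u i) ∧ ∑' i, .ofReal (u i ^ s) ≤ ε ∧
      E ⊆ ⋃ i, closedBall (p i) (u i) := by
  have hε2 : ε / 2 ≠ 0 := ENNReal.div_ne_zero.2 ⟨hε, ofNat_ne_top⟩
  simp only [Measure.hausdorffMeasure_apply, ENNReal.iSup_eq_zero] at hE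
  obtain ⟨t, hEt, ht1, ht⟩ : ∃ t : ℕ → Set X, E ⊆ ⋃ n, t n ∧ (∀ n, ediam (t n) ≤ 1) ∧
      ∑' n, ⨆ _ : (t n).Nonempty, ediam (t n) ^ s < ε / 2 := by
    simpa only [iInf_lt_iff, exists_prop] using (hE 1 one_pos).trans_lt (pos_iff_ne_zero.2 hε2)
  obtain ⟨η, hη, hηsum⟩ := ENNReal.exists_pos_sum_of_countable hε2 ℕ
  have hfin : ∀ n, ediam (t n) ≠ ∞ := fun n ↦ ((ht1 n).trans_lt one_lt_top).ne
  have hdiam : ∀ n, ENNReal.ofReal (diam (t n) ^ s) ≤ ⨆ _ : (t n).Nonempty, ediam (t n) ^ s := by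
    intro n
    rcases (t n).eq_empty_or_nonempty with hn | hn
    · simp [hn, hs.ne']
    · rw [← ENNReal.ofReal_rpow_of_nonneg diam_nonneg hs.le, diam, ENNReal.ofReal_toReal (hfin n)]
      exact le_iSup_of_le hn le_rfl
  choose p u hu htu hpow using fun n ↦ exists_subset_closedBall_rpow_eq
    (isBounded_iff_ediam_ne_top.2 (hfin n)) hs (NNReal.coe_pos.2 (hη n))
  refine ⟨p, u, hu, ?_, hEt.trans (iUnion_mono htu)⟩
  calc ∑' n, ENNReal.ofReal (u n ^ s) = ∑' n, (ENNReal.ofReal (diam (t n) ^ s) + η n) := by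
        simp only [hpow, ENNReal.ofReal_add (Real.rpow_nonneg diam_nonneg s) (NNReal.coe_nonneg _),
          ENNReal.ofReal_coe_nnreal]
    _ = ∑' n, ENNReal.ofReal (diam (t n) ^ s) + ∑' n, (η n : ℝ≥0∞) := ENNReal.tsum_add
    _ ≤ ε / 2 + ε / 2 := add_le_add ((ENNReal.tsum_le_tsum hdiam).trans ht.le) hηsum.le
    _ = ε := ENNReal.add_halves ε

lemma tendsto_zero_of_succ_le_mul {r : ℕ → ℝ} {q : ℝ} (hr : ∀ n, 0 ≤ r n) (hq : q ∈ Ico 0 1)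
    (h : ∀ n, r (n + 1) ≤ q * r n) : Tendsto r atTop (𝓝 0) := by
  refine squeeze_zero hr (fun n ↦ le_geom hq.1 n fun k _ ↦ h k) ?_
  simpa only [zero_mul] using (tendsto_pow_atTop_nhds_zero_of_lt_one hq.1 hq.2).mul_const (r 0)

lemma exists_mem_iInter_of_closedBall_refinement [CompleteSpace X] {P : X → ℝ → Prop}
    {G : ℕ → Set X} (hpos : ∀ y l, P y l → 0 < l)
    (hstep : ∀ n y l, P y l →
      ∃ x ρ, ρ ≤ l / 2 ∧ closedBall x ρ ⊆ closedBall y l ∩ G n ∧ P x ρ)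
    {y : X} {l : ℝ} (hy : P y l) :
    ∃ z ∈ ⋂ n, G n, ∀ ε > 0, ∃ x ρ, ρ < ε ∧ z ∈ closedBall x ρ ∧ P x ρ := by
  choose! nextCenter nextRadius hhalf hsub hP using hstep
  let b : ℕ → X × ℝ := fun n ↦
    n.rec (y, l) fun n b ↦ (nextCenter n b.1 b.2, nextRadius n b.1 b.2)
  have hb : ∀ n, P (b n).1 (b n).2 := fun n ↦ by
    induction n with
    | zero => exact hy
    | succ n ih => exact hP n _ _ ih
  have hnext : ∀ n, closedBall (b (n + 1)).1 (b (n + 1)).2 ⊆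
      closedBall (b n).1 (b n).2 ∩ G n := fun n ↦ hsub n _ _ (hb n)
  have hanti : Antitone fun n ↦ closedBall (b n).1 (b n).2 :=
    antitone_nat_of_succ_le fun n ↦ (hnext n).trans inter_subset_left
  have hradius : Tendsto (fun n ↦ (b n).2) atTop (𝓝 0) :=
    tendsto_zero_of_succ_le_mul (q := 2⁻¹) (fun n ↦ (hpos _ _ (hb n)).le) (by norm_num)
      fun n ↦ (hhalf n _ _ (hb n)).trans_eq (div_eq_inv_mul _ _)
  obtain ⟨z, hz⟩ : (⋂ n, closedBall (b n).1 (b n).2).Nonempty := by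
    refine nonempty_iInter_of_nonempty_biInter (fun _ ↦ isClosed_closedBall)
      (fun _ ↦ isBounded_closedBall) (fun N ↦ ⟨(b N).1, mem_iInter₂.2 fun n hn ↦ hanti hn ?_⟩) ?_
    · exact mem_closedBall_self (hpos _ _ (hb N)).le
    · exact squeeze_zero (fun _ ↦ diam_nonneg)
        (fun n ↦ diam_closedBall (hpos _ _ (hb n)).le) (by simpa using hradius.const_mul 2)
  rw [mem_iInter] at hz
  refine ⟨z, mem_iInter.2 fun n ↦ (hnext n (hz (n + 1))).2, fun ε hε ↦ ?_⟩
  obtain ⟨n, hn⟩ := (hradius.eventually_lt_const hε).exists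
  exact ⟨(b n).1, (b n).2, hn, hz n, hb n⟩

section AhlforsRegular

variable [CompleteSpace X] [MeasurableSpace X] [BorelSpace X] {μ : Measure X} {d : ℝ}

lemma hausdorffMeasure_iInter_ne_zero_of_isUbiquitous (hμ : IsAhlforsRegular μ d) {α s : ℝ}
    (hα : α ∈ Ioc 0 1) (hs : 0 < s) (hsα : s < α * d) {y : X} {r : ℝ} (hr : 0 < r)
    {G : ℕ → Set X} (hG : ∀ n, IsUbiquitous α (closedBall y r) (G n)) :
    μH[s] (⋂ n, G n) ≠ 0 := by
  obtain ⟨c, hc, K, hK, R, hR, hball⟩ := hμ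
  obtain ⟨η, hηc, hη⟩ := ((eventually_const_mul_rpow_lt (K * 4 ^ d) one_pos hc).and
    (Ioc_mem_nhdsGT one_pos)).exists
  rw [Real.rpow_one] at hηc
  intro hzero
  have : Nonempty X := ⟨y⟩
  have hrR : 0 < min r R := lt_min hr hR
  obtain ⟨p, u, hu, husum, hcover⟩ := exists_closedBall_cover_of_hausdorffMeasure_eq_zero hs hzero
    (ε := .ofReal (η * min r R ^ s))
    (ENNReal.ofReal_pos.2 (mul_pos hη.1 (Real.rpow_pos_of_pos hrR s))).ne'
  let P : X → ℝ → Prop := fun x l ↦ 0 < l ∧ l ≤ R ∧ closedBall x l ⊆ closedBall y r ∧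
    meetingWeight p u s (closedBall x l) ≤ .ofReal (η * l ^ s)
  have hstep : ∀ n x l, P x l →
      ∃ x' ρ, ρ ≤ l / 2 ∧ closedBall x' ρ ⊆ closedBall x l ∩ G n ∧ P x' ρ := by
    rintro n x l ⟨hl, hlR, hxy, hx⟩
    have hhalf : closedBall x (l / 2) ⊆ closedBall y r :=
      (closedBall_subset_closedBall (half_le_self hl.le)).trans hxy
    obtain ⟨x', ρ, hρ, hρl, hsub, hx'⟩ := exists_closedBall_subset_meetingWeight_le
      (fun x r hr ↦ (hball x r hr).1) hK.le ((hball x (l / 2) (half_pos hl)).2 (by linarith))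
      hα hs hsα hη hηc hu hl ((hG n).mono_left hhalf) hx
    exact ⟨x', ρ, hρl, hsub, hρ, by linarith, (hsub.trans inter_subset_left).trans hxy, hx'⟩
  obtain ⟨z, hzG, hz⟩ := exists_mem_iInter_of_closedBall_refinement (fun _ _ h ↦ h.1) hstep
    (y := y) (l := min r R) ⟨hrR, min_le_right _ _, closedBall_subset_closedBall (min_le_left _ _),
      meetingWeight_le_tsum.trans husum⟩
  obtain ⟨i, hi⟩ := mem_iUnion.1 (hcover hzG)
  obtain ⟨x, ρ, hρu, hzx, hρ, -, -, hx⟩ := hz (u i) (hu i)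
  refine hρu.not_ge (le_of_meetingWeight_le hs (hu i).le hρ.le ⟨z, hi, hzx⟩ (hx.trans ?_))
  exact ENNReal.ofReal_le_ofReal (mul_le_of_le_one_left (by positivity) hη.2)

theorem ofReal_mul_le_dimH_iInter_of_isUbiquitous (hμ : IsAhlforsRegular μ d) {α : ℝ}
    (hα : α ∈ Ioc 0 1) {y : X} {r : ℝ} (hr : 0 < r) {G : ℕ → Set X}
    (hG : ∀ n, IsUbiquitous α (closedBall y r) (G n)) :
    .ofReal (α * d) ≤ dimH (⋂ n, G n) := by
  refine le_of_forall_lt fun t ht ↦ ?_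
  obtain ⟨s, hts, hsα⟩ := ENNReal.lt_iff_exists_nnreal_btwn.1 ht
  have hs : (0 : ℝ) < s := NNReal.coe_pos.2 (ENNReal.coe_pos.1 (bot_le.trans_lt hts))
  have hsα' : (s : ℝ) < α * d := by
    rwa [← ENNReal.ofReal_coe_nnreal, ENNReal.ofReal_lt_ofReal_iff_of_nonneg s.coe_nonneg] at hsα
  exact hts.trans_le <| le_dimH_of_hausdorffMeasure_ne_zero <|
    hausdorffMeasure_iInter_ne_zero_of_isUbiquitous hμ hα hs hsα' hr hG

end AhlforsRegular

lemma le_apply_of_apply_lt_apply_add {m : ℕ → ℕ} {M : ℕ} (hm : ∀ j k, j < k → m j < m (k + M))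
    {N k : ℕ} (hk : N * (M + 1) ≤ k) : N ≤ m k := by
  induction N generalizing k with
  | zero => exact Nat.zero_le _
  | succ N ih =>
    rw [Nat.succ_mul] at hk
    have hlt := hm (N * (M + 1)) (k - M) (by lia)
    rw [Nat.sub_add_cancel (by lia)] at hlt
    exact (ih le_rfl).trans_lt hlt

lemma exists_ge_apply_succ_lt_le {r : ℕ → ℝ} {Λ Λ' ρ : ℝ} (hr : ∀ k, 0 < r k) (hΛ : 1 < Λ)
    (hdec : ∀ k, Λ * r (k + 1) ≤ r k) (hinc : ∀ k, r k ≤ Λ' * r (k + 1)) (hρ : 0 < ρ) {n : ℕ}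
    (hn : Λ' ^ n * ρ ≤ r 0) : ∃ k ≥ n, r (k + 1) < ρ ∧ ρ ≤ r k := by
  have hΛ' : 0 < Λ' := pos_of_mul_pos_left ((hr 0).trans_le (hinc 0)) (hr 1).le
  have hρn : ρ ≤ r n := by
    have hgeom : Λ'⁻¹ ^ n * r 0 ≤ r n :=
      geom_le (inv_nonneg.2 hΛ'.le) n fun k _ ↦ inv_mul_le_of_le_mul₀ hΛ'.le (hr _).le (hinc k)
    rw [inv_pow] at hgeom
    exact (le_inv_mul_iff₀ (by positivity)).2 hn |>.trans hgeom
  have hlim : Tendsto r atTop (𝓝 0) :=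
    tendsto_zero_of_succ_le_mul (fun k ↦ (hr k).le) ⟨by positivity, inv_lt_one_of_one_lt₀ hΛ⟩
      fun k ↦ (le_inv_mul_iff₀ (by positivity)).2 (hdec k)
  by_contra! hstay
  have hge : ∀ k ≥ n, ρ ≤ r k := fun k hk ↦ by
    induction k, hk using Nat.le_induction with
    | base => exact hρn
    | succ k hk ih => exact not_lt.1 fun hlt ↦ (hstay k hk hlt).not_ge ih
  exact hρ.not_ge (ge_of_tendsto hlim (eventually_atTop.2 ⟨n, hge⟩))

lemma dist_le_infDist_closedBall_add (a x : X) {r : ℝ} (hr : 0 ≤ r) :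
    dist a x ≤ infDist a (closedBall x r) + r := by
  rw [← sub_le_iff_le_add, le_infDist ⟨x, mem_closedBall_self hr⟩]
  intro y hy
  linarith [dist_triangle a y x, mem_closedBall.1 hy]

/-- The balls `closedBall (x k) (r k)` accumulate at `a` at a polynomial rate of exponent `α`: these
are conditions (i)–(iv) of `stmt6`, with balls of a metric space in place of the intervals `I_k(a)`.
Indices start at `k = 0` instead of `k = 1`. -/
structure IsBallApproach (α Λ Λ' D : ℝ) (M : ℕ) (S : ℕ → Set X) (a : X) (x : ℕ → X) (r : ℕ → ℝ)
    (m : ℕ → ℕ) : Prop where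
  radius_pos : ∀ k, 0 < r k
  infDist_le : ∀ k, infDist a (closedBall (x k) (r k)) ≤ D * r k ^ α
  index_lt : ∀ j k, j < k → m j < m (k + M)
  closedBall_subset : ∀ k, closedBall (x k) (r k) ⊆ S (m k)
  mul_radius_succ_le : ∀ k, Λ * r (k + 1) ≤ r k
  radius_le_mul_succ : ∀ k, r k ≤ Λ' * r (k + 1)

section BallApproach

variable {α Λ Λ' D : ℝ} {M : ℕ} {S : ℕ → Set X}

lemma IsBallApproach.exists_closedBall_subset_biUnion {a : X} {x : ℕ → X} {r : ℕ → ℝ} {m : ℕ → ℕ}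
    (h : IsBallApproach α Λ Λ' D M S a x r m) (hα : α ∈ Ioc 0 1) (hΛ : 1 < Λ) {N : ℕ} {ρ : ℝ}
    (hρ : 0 < ρ) (hρ1 : ρ ≤ 1) (hρN : Λ' ^ (N * (M + 1)) * ρ ≤ r 0) :
    ∃ z, dist z a ≤ (D * Λ' ^ α + Λ') * ρ ^ α ∧ closedBall z ρ ⊆ ⋃ n ≥ N, S n := by
  obtain ⟨hr, hdist, hm, hS, hdec, hinc⟩ := h
  have hΛ' : 0 < Λ' := pos_of_mul_pos_left ((hr 0).trans_le (hinc 0)) (hr 1).le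
  have hD : 0 ≤ D :=
    nonneg_of_mul_nonneg_left (infDist_nonneg.trans (hdist 0)) (Real.rpow_pos_of_pos (hr 0) α)
  obtain ⟨k, hk, hkρ, hρk⟩ := exists_ge_apply_succ_lt_le hr hΛ hdec hinc hρ hρN
  have hrk : r k ≤ Λ' * ρ := (hinc k).trans (by gcongr)
  refine ⟨x k, ?_, ?_⟩
  · calc dist (x k) a = dist a (x k) := dist_comm _ _
      _ ≤ infDist a (closedBall (x k) (r k)) + r k := dist_le_infDist_closedBall_add _ _ (hr k).le
      _ ≤ D * r k ^ α + r k := by gcongr; exact hdist k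
      _ ≤ D * (Λ' * ρ) ^ α + Λ' * ρ := by gcongr; exacts [(hr k).le, hα.1.le]
      _ ≤ D * (Λ' ^ α * ρ ^ α) + Λ' * ρ ^ α := by
          rw [Real.mul_rpow hΛ'.le hρ.le]
          gcongr
          exact Real.self_le_rpow_of_le_one hρ.le hρ1 hα.2
      _ = (D * Λ' ^ α + Λ') * ρ ^ α := by ring
  · calc closedBall (x k) ρ ⊆ closedBall (x k) (r k) := closedBall_subset_closedBall hρk
      _ ⊆ S (m k) := hS k
      _ ⊆ ⋃ n ≥ N, S n := subset_biUnion_of_mem (le_apply_of_apply_lt_apply_add hm hk)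

lemma isUbiquitous_biUnion_of_isBallApproach {A : Set X} {x : X → ℕ → X} {r : X → ℕ → ℝ}
    {m : X → ℕ → ℕ} (h : ∀ a ∈ A, IsBallApproach α Λ Λ' D M S a (x a) (r a) (m a))
    (hα : α ∈ Ioc 0 1) (hΛ : 1 < Λ) {ε : ℝ} (hε : 0 < ε) (hr : ∀ a ∈ A, ε ≤ r a 0) (N : ℕ) :
    IsUbiquitous α A (⋃ n ≥ N, S n) := by
  refine ⟨D * Λ' ^ α + Λ', ?_⟩
  have hsmall : ∀ᶠ ρ in 𝓝[>] (0 : ℝ), Λ' ^ (N * (M + 1)) * ρ ^ (1 : ℝ) < ε :=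
    eventually_const_mul_rpow_lt _ one_pos hε
  filter_upwards [hsmall, Ioc_mem_nhdsGT one_pos] with ρ hρε ⟨hρ, hρ1⟩ a ha
  rw [Real.rpow_one] at hρε
  exact (h a ha).exists_closedBall_subset_biUnion hα hΛ hρ hρ1 (hρε.le.trans (hr a ha))

end BallApproach

lemma exists_closedBall_subset_closure_setOf_le [BaireSpace X] {V : Set X} (hV : IsOpen V)
    (hne : V.Nonempty) {f : X → ℝ} (hf : ∀ a ∈ V, 0 < f a) :
    ∃ ε > 0, ∃ y, ∃ R > 0, closedBall y R ⊆ closure {a ∈ V | ε ≤ f a} := by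
  let A : ℕ → Set X := fun n ↦ {a ∈ V | 1 / ((n : ℝ) + 1) ≤ f a}
  have hVA : V ⊆ ⋃ n, A n := fun a ha ↦
    let ⟨n, hn⟩ := exists_nat_one_div_lt (hf a ha)
    mem_iUnion.2 ⟨n, ha, hn.le⟩
  obtain ⟨n, hn⟩ : ∃ n, (interior (closure (A n))).Nonempty := by
    by_contra! hempty
    exact not_isMeagre_of_isOpen hV hne <|
      (isMeagre_iUnion fun n ↦ IsNowhereDense.isMeagre (hempty n)).mono hVA
  obtain ⟨y, hy⟩ := hn
  obtain ⟨R, hR, hyR⟩ := nhds_basis_closedBall.mem_iff.1 (mem_interior_iff_mem_nhds.1 hy)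
  exact ⟨1 / (n + 1), by positivity, y, R, hR, hyR⟩

lemma setOf_infinite_eq_iInter_biUnion {α : Type*} (S : ℕ → Set α) :
    {a | {m | a ∈ S m}.Infinite} = ⋂ N, ⋃ m ≥ N, S m := by
  ext a
  simp [← Nat.frequently_atTop_iff_infinite, frequently_atTop]

theorem stmt6_general [CompleteSpace X] [MeasurableSpace X] [BorelSpace X] {μ : Measure X} {d : ℝ}
    (hμ : IsAhlforsRegular μ d) {α Λ Λ' D : ℝ} (hα : α ∈ Ioc 0 1) (hΛ : 1 < Λ) {M : ℕ} {V : Set X}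
    (hV : IsOpen V) (hne : V.Nonempty) {S : ℕ → Set X}
    (h : ∀ a ∈ V, ∃ x r m, IsBallApproach α Λ Λ' D M S a x r m) :
    .ofReal (α * d) ≤ dimH {a | {m | a ∈ S m}.Infinite} := by
  choose! x r m h using h
  obtain ⟨ε, hε, y, R, hR, hyR⟩ := exists_closedBall_subset_closure_setOf_le hV hne
    fun a ha ↦ (h a ha).radius_pos 0
  rw [setOf_infinite_eq_iInter_biUnion]
  refine ofReal_mul_le_dimH_iInter_of_isUbiquitous hμ hα (y := y) hR fun N ↦ ?_
  refine (IsUbiquitous.closure ?_).mono_left hyR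
  exact isUbiquitous_biUnion_of_isBallApproach (fun a ha ↦ h a ha.1) hα hΛ hε (fun a ha ↦ ha.2) N

lemma isBallApproach_of_Icc {α Λ Λ' D a : ℝ} {M : ℕ} {S : ℕ → Set ℝ} {e : ℕ → ℝ × ℝ} {m : ℕ → ℕ}
    (h : ∀ k, 1 ≤ k → (e k).1 < (e k).2 ∧
      infDist a (Icc (e k).1 (e k).2) ≤ D * ((e k).2 - (e k).1) ^ α ∧
      (∀ j, 0 < j → j < k → m j < m (k + M)) ∧ Icc (e k).1 (e k).2 ⊆ S (m k) ∧
      Λ * ((e (k + 1)).2 - (e (k + 1)).1) < (e k).2 - (e k).1 ∧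
      (e k).2 - (e k).1 < Λ' * ((e (k + 1)).2 - (e (k + 1)).1)) :
    IsBallApproach α Λ Λ' (D * 2 ^ α) M S a (fun k ↦ ((e (k + 1)).1 + (e (k + 1)).2) / 2)
      (fun k ↦ ((e (k + 1)).2 - (e (k + 1)).1) / 2) (fun k ↦ m (k + 1)) := by
  have hpos : ∀ k, 0 < ((e (k + 1)).2 - (e (k + 1)).1) / 2 := fun k ↦
    half_pos (sub_pos.2 (h (k + 1) k.succ_pos).1)
  refine ⟨hpos, fun k ↦ ?_, fun j k hjk ↦ ?_, fun k ↦ ?_, fun k ↦ ?_, fun k ↦ ?_⟩ <;>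
    obtain ⟨-, hdist, hm, hS, hdec, hinc⟩ := h (k + 1) k.succ_pos
  · rwa [← Real.Icc_eq_closedBall, mul_assoc, ← Real.mul_rpow zero_le_two (hpos k).le,
      mul_div_cancel₀ _ two_ne_zero]
  · simpa only [add_right_comm] using hm (j + 1) j.succ_pos (by lia)
  · rwa [← Real.Icc_eq_closedBall]
  · linarith
  · linarith

end

/-- Abstract version of the construction of Section 2.3 of the paper: if around
every parameter `a₁` of a nonempty open interval `I` there accumulate, at a
polynomial rate of exponent `α`, intervals `I_k(a₁)` of parameters belonging to
the sets `S (m k)` with (essentially) growing indices `m k`, then the set of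
parameters belonging to infinitely many of the `S m` has Hausdorff dimension at
least `α`.  The interval `I_k(a₁)` is encoded by its endpoints `(e k).1 < (e k).2`. -/
theorem stmt6 (α Λ Λ' D : ℝ) (hα : α ∈ Set.Ioo (0 : ℝ) 1) (hΛ : 1 < Λ)
    (hΛ' : Λ < Λ') (hD : 0 < D) (Mbar : ℕ) (hMbar : 0 < Mbar) (I : Set ℝ)
    (hI : ∃ c d : ℝ, c < d ∧ I = Set.Ioo c d) (S : ℕ → Set ℝ)
    (hyp : ∀ a₁ ∈ I, ∃ (e : ℕ → ℝ × ℝ) (m : ℕ → ℕ),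
      ((e 1).2 - (e 1).1 ≤ 1) ∧
      (∀ k, 1 ≤ k → 0 < m k) ∧
      (∀ k, 1 ≤ k →
        -- nondegenerate closed bounded intervals
        (e k).1 < (e k).2 ∧
        -- (i) the distance from `a₁` to `I_k(a₁)` is at most `D·|I_k(a₁)|^α`
        Metric.infDist a₁ (Set.Icc (e k).1 (e k).2) ≤ D * ((e k).2 - (e k).1) ^ α ∧
        -- (ii) `m (k + Mbar) > m j` for all `0 < j < k`
        (∀ j, 0 < j → j < k → m j < m (k + Mbar)) ∧
        -- (iii) `I_k(a₁) ⊆ S (m k)`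
        Set.Icc (e k).1 (e k).2 ⊆ S (m k) ∧
        -- (iv) `Λ·|I_{k+1}| < |I_k| < Λ'·|I_{k+1}|`
        Λ * ((e (k + 1)).2 - (e (k + 1)).1) < (e k).2 - (e k).1 ∧
        (e k).2 - (e k).1 < Λ' * ((e (k + 1)).2 - (e (k + 1)).1))) :
    ENNReal.ofReal α ≤ dimH {a : ℝ | {m : ℕ | a ∈ S m}.Infinite} := by
  obtain ⟨c, d, hcd, rfl⟩ := hI
  simpa only [mul_one] using stmt6_general isAhlforsRegular_volume_real ⟨hα.1, hα.2.le⟩ hΛ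
    isOpen_Ioo (Set.nonempty_Ioo.2 hcd) fun a ha ↦
      let ⟨_, _, _, _, h⟩ := hyp a ha; ⟨_, _, _, isBallApproach_of_Icc h⟩
end

section
/- Let b ∈ (0,1), Λ ∈ (1,5], and C ≥ 1 be real numbers, and let (σ_k)_{k∈ℤ} and (λ_k)_{k∈ℤ} be families of positive real numbers such that for every k ∈ ℤ one has σ_k·λ_k ≤ C·b^{|k|} and C^{−1}·Λ^{|k|} ≤ σ_k ≤ 5^{|k|}. Then there exists a constant C' > 0, depending only on b, Λ, and C, such that for all natural numbers n and n' with 1/σ_n ≤ λ_{−n'}, the following hold: (a) n' ≤ (n·log 5 + log C')/|log b|; and (b) σ_{n'} ≤ C'·σ_n^{(log 5)²/(|log b|·log Λ)}. In particular, σ_n·σ_{n'} ≤ C'·σ_n^{1 + (log 5)²/(|log b|·log Λ)}. -/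
/-!
Both bounds come from a single inequality. The product bound and `C⁻¹ ≤ σ_k` give
`λ_{−n'} ≤ D b^{n'}` with `D = C²`, so `1/σ_n ≤ λ_{−n'}` becomes `b^{−n'} ≤ D σ_n`, that is,
`n' |log b| ≤ log (D σ_n)`. With `σ_k ≤ M^{|k|}`, `M = 5`, this bounds `n'`; multiplied by an
exponent `p ≥ log M / |log b|` it gives `σ_{n'} ≤ M^{n'} ≤ (D σ_n)^p`. Since `log Λ ≤ log M`, the
exponent `p = (log M)² / (|log b| log Λ)` is admissible.
-/

open Real

section OneLeMulPow

variable {b x : ℝ} {m : ℕ}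

lemma natCast_mul_abs_log_le_log (hb : b ∈ Set.Ioo (0 : ℝ) 1) (h : 1 ≤ x * b ^ m) :
    m * |log b| ≤ log x := by
  have hbm : 0 < b ^ m := pow_pos hb.1 m
  have hx : 0 < x := pos_of_mul_pos_left (one_pos.trans_le h) hbm.le
  have hlog : 0 ≤ log x + m * log b := by
    simpa only [log_mul hx.ne' hbm.ne', log_pow] using log_nonneg h
  rw [abs_of_neg (log_neg hb.1 hb.2)]
  linarith

lemma pow_le_rpow_of_one_le_mul_pow {M p : ℝ} (hb : b ∈ Set.Ioo (0 : ℝ) 1) (hM : 1 ≤ M)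
    (hp : log M / |log b| ≤ p) (h : 1 ≤ x * b ^ m) : M ^ m ≤ x ^ p := by
  have hx : 0 < x := pos_of_mul_pos_left (one_pos.trans_le h) (pow_pos hb.1 m).le
  have hL : 0 < |log b| := abs_pos.mpr (log_neg hb.1 hb.2).ne
  have hp0 : 0 ≤ p := (div_nonneg (log_nonneg hM) hL.le).trans hp
  rw [← log_le_log_iff (by positivity) (by positivity), log_pow, log_rpow hx]
  calc m * log M ≤ m * (p * |log b|) := by gcongr; exact (div_le_iff₀ hL).mp hp
    _ = p * (m * |log b|) := by ring
    _ ≤ p * log x := by gcongr; exact natCast_mul_abs_log_le_log hb h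

end OneLeMulPow

lemma le_sq_mul_of_inv_mul_le_of_mul_le {C g s l t : ℝ} (hC : 0 < C) (hg : 1 ≤ g)
    (hs : C⁻¹ * g ≤ s) (hl : 0 ≤ l) (h : s * l ≤ C * t) : l ≤ C ^ 2 * t := by
  have hinv : C⁻¹ ≤ s := (le_mul_of_one_le_right (inv_nonneg.mpr hC.le) hg).trans hs
  calc l = C * (C⁻¹ * l) := (mul_inv_cancel_left₀ hC.ne' l).symm
    _ ≤ C * (s * l) := by gcongr
    _ ≤ C * (C * t) := by gcongr
    _ = C ^ 2 * t := by ring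

lemma log_div_le_log_sq_div_mul_log {Λ M w : ℝ} (hΛ : 1 < Λ) (hΛM : Λ ≤ M) (hw : 0 ≤ w) :
    log M / w ≤ log M ^ 2 / (w * log Λ) := by
  have hlogΛ : 0 < log Λ := log_pos hΛ
  have hlog : log Λ ≤ log M := log_le_log (one_pos.trans hΛ) hΛM
  calc log M / w ≤ log M / w * (log M / log Λ) :=
        le_mul_of_one_le_right (div_nonneg (hlogΛ.le.trans hlog) hw) ((one_le_div hlogΛ).mpr hlog)
    _ = log M ^ 2 / (w * log Λ) := by rw [div_mul_div_comm, sq]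

theorem stmt8_general (b M D p : ℝ) (hb : b ∈ Set.Ioo (0 : ℝ) 1) (hM : 1 ≤ M) (hD : 0 < D)
    (hp : log M / |log b| ≤ p) :
    ∃ C' : ℝ, 0 < C' ∧
      ∀ σ lam : ℤ → ℝ,
        (∀ k : ℤ, 0 < σ k) →
        (∀ k : ℤ, lam k ≤ D * b ^ k.natAbs) →
        (∀ k : ℤ, σ k ≤ M ^ k.natAbs) →
        ∀ n n' : ℕ, 1 / σ (n : ℤ) ≤ lam (-(n' : ℤ)) →
          ((n' : ℝ) ≤ ((n : ℝ) * log M + log C') / |log b| ∧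
            σ (n' : ℤ) ≤ C' * σ (n : ℤ) ^ p) ∧
          σ (n : ℤ) * σ (n' : ℤ) ≤ C' * σ (n : ℤ) ^ (1 + p) := by
  refine ⟨max D (D ^ p), lt_max_of_lt_left hD, fun σ lam hσ hlam hσM n n' hn => ?_⟩
  have hσn : 0 < σ n := hσ n
  have hkey : 1 ≤ D * σ n * b ^ n' := by
    have hle : 1 / σ n ≤ D * b ^ n' := by simpa using hn.trans (hlam (-n'))
    rwa [div_le_iff₀ hσn, mul_right_comm] at hle
  have hpow : σ n' ≤ max D (D ^ p) * σ n ^ p :=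
    calc σ n' ≤ M ^ n' := hσM n'
      _ ≤ (D * σ n) ^ p := pow_le_rpow_of_one_le_mul_pow hb hM hp hkey
      _ = D ^ p * σ n ^ p := mul_rpow hD.le hσn.le
      _ ≤ max D (D ^ p) * σ n ^ p := by gcongr; exact le_max_right _ _
  refine ⟨⟨?_, hpow⟩, ?_⟩
  · rw [le_div_iff₀ (abs_pos.mpr (log_neg hb.1 hb.2).ne)]
    calc n' * |log b| ≤ log (D * σ n) := natCast_mul_abs_log_le_log hb hkey
      _ = log (σ n) + log D := by rw [log_mul hD.ne' hσn.ne', add_comm]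
      _ ≤ log (M ^ n) + log (max D (D ^ p)) := by
        gcongr
        · exact hσM n
        · exact le_max_left _ _
      _ = n * log M + log (max D (D ^ p)) := by rw [log_pow]
  · calc σ n * σ n' ≤ σ n * (max D (D ^ p) * σ n ^ p) := by gcongr
      _ = max D (D ^ p) * σ n ^ (1 + p) := by rw [rpow_add hσn, rpow_one, mul_left_comm]

/-- The abstract inequality of the unnumbered Proposition of Section 2.2 of the
paper: from `σ_k·λ_k ≤ C·b^{|k|}` and `C⁻¹·Λ^{|k|} ≤ σ_k ≤ 5^{|k|}`, one gets a
constant `C'` depending only on `b`, `Λ`, `C` such that whenever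
`1/σ_n ≤ λ_{−n'}`, the index `n'` is at most `(n·log 5 + log C')/|log b|` and
`σ_{n'} ≤ C'·σ_n^{(log 5)²/(|log b|·log Λ)}`; in particular
`σ_n·σ_{n'} ≤ C'·σ_n^{1 + (log 5)²/(|log b|·log Λ)}`. -/
theorem stmt8 (b Λ C : ℝ) (hb : b ∈ Set.Ioo (0 : ℝ) 1) (hΛ : Λ ∈ Set.Ioc (1 : ℝ) 5)
    (hC : 1 ≤ C) :
    ∃ C' : ℝ, 0 < C' ∧
      ∀ σ lam : ℤ → ℝ,
        (∀ k : ℤ, 0 < σ k) → (∀ k : ℤ, 0 < lam k) →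
        (∀ k : ℤ, σ k * lam k ≤ C * b ^ k.natAbs) →
        (∀ k : ℤ, C⁻¹ * Λ ^ k.natAbs ≤ σ k) →
        (∀ k : ℤ, σ k ≤ 5 ^ k.natAbs) →
        ∀ n n' : ℕ, 1 / σ (n : ℤ) ≤ lam (-(n' : ℤ)) →
          ((n' : ℝ) ≤ ((n : ℝ) * Real.log 5 + Real.log C') / |Real.log b| ∧
            σ (n' : ℤ) ≤
              C' * σ (n : ℤ) ^ ((Real.log 5) ^ 2 / (|Real.log b| * Real.log Λ))) ∧
          σ (n : ℤ) * σ (n' : ℤ) ≤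
            C' * σ (n : ℤ) ^ (1 + (Real.log 5) ^ 2 / (|Real.log b| * Real.log Λ)) := by
  have hC0 : 0 < C := one_pos.trans_le hC
  obtain ⟨C', hC', H⟩ := stmt8_general b 5 (C ^ 2) _ hb (by norm_num) (pow_pos hC0 2)
    (log_div_le_log_sq_div_mul_log hΛ.1 hΛ.2 (abs_nonneg _))
  exact ⟨C', hC', fun σ lam hσ hlam hprod hlow => H σ lam hσ fun k =>
    le_sq_mul_of_inv_mul_le_of_mul_le hC0 (one_le_pow₀ hΛ.1.le) (hlow k) (hlam k).le (hprod k)⟩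
end
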